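/- arXiv:2604.27397 — 2 statements merged into one kernel-verified Lean document; each statement's English description precedes it below -/
import Mathlib

section
/- The action of SL(2, $Γ_{n+1}) on Lipschitz spinors by matrix multiplication is transitive: for any two Lipschitz spinors κ_1, κ_2 there exists A ∈ SL(2, $Γ_{n+1}) with A κ_1 = κ_2. In particular, for any Lipschitz spinor (ξ,η) with both components nonzero, the matrix [[ξ, −(1/2)η^{*-1}],[η, (1/2)ξ^{*-1}]] lies in SL(2, $Γ_{n+1}) and sends (1,0) to (ξ,η). -/
open CliffordAlgebra

noncomputable section

namespace PaperCliff

noncomputable instance : Invertible (2 : ℝ) := invertibleOfNonzero two_ne_zero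

/-- The quadratic form on `ℝ^{p,q}`: `p` generators of square `+1`, `q` of square `-1`. -/
def sigQ (p q : ℕ) : QuadraticForm ℝ (Fin (p + q) → ℝ) :=
  QuadraticMap.weightedSumSquares ℝ
    (fun i : Fin (p + q) => if (i : ℕ) < p then (1 : ℝ) else -1)

/-- The negative-definite quadratic form for `Cl(0,n)`. -/
def negQ (n : ℕ) : QuadraticForm ℝ (Fin n → ℝ) :=
  QuadraticMap.weightedSumSquares ℝ (fun _ : Fin n => (-1 : ℝ))

variable {M : Type*} [AddCommGroup M] [Module ℝ M]

/-- Clifford conjugation: composite of the grade involution and reversal. -/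
def cconj {Q : QuadraticForm ℝ M} (x : CliffordAlgebra Q) : CliffordAlgebra Q :=
  reverse (involute x)

/-- The paravectors `ℝ ⊕ ℝ^{p,q}` inside the Clifford algebra. -/
def paravec (Q : QuadraticForm ℝ M) : Submodule ℝ (CliffordAlgebra Q) :=
  LinearMap.range (Algebra.linearMap ℝ (CliffordAlgebra Q)) ⊔ LinearMap.range (ι Q)

/-- The real (degree-zero) component of an element of the Clifford algebra,
via the canonical linear isomorphism with the exterior algebra. -/
def clRe {Q : QuadraticForm ℝ M} (x : CliffordAlgebra Q) : ℝ :=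
  ExteriorAlgebra.algebraMapInv (CliffordAlgebra.equivExterior Q x)

/-- The reduced basis monomial `i_{j₁} ⋯ i_{j_k}` for a finite set of indices (in
increasing order). -/
def mono {m : ℕ} (Q : QuadraticForm ℝ (Fin m → ℝ)) (s : Finset (Fin m)) :
    CliffordAlgebra Q :=
  ((s.sort (· ≤ ·)).map fun j => ι Q (Pi.single j 1)).prod

/-- The (paravector) Lipschitz group, as a subgroup of the units: the group generated by
invertible paravectors. -/
def lipUnits (Q : QuadraticForm ℝ M) : Subgroup (CliffordAlgebra Q)ˣ :=
  Subgroup.closure {u : (CliffordAlgebra Q)ˣ | (u : CliffordAlgebra Q) ∈ paravec Q}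

/-- The underlying set of the paravector Lipschitz group `$Γ`. -/
def lipGrp (Q : QuadraticForm ℝ M) : Set (CliffordAlgebra Q) :=
  {x | ∃ u ∈ lipUnits Q, (u : CliffordAlgebra Q) = x}

/-- The Lipschitz monoid `$Γ^▷ = $Γ ∪ {0}`. -/
def lipMon (Q : QuadraticForm ℝ M) : Set (CliffordAlgebra Q) :=
  insert 0 (lipGrp Q)

/-- A Lipschitz spinor: a pair of elements of the Lipschitz monoid, not both zero,
with `ξ ⬝ conj η` a paravector. -/
def IsSpinor (Q : QuadraticForm ℝ M) (ξ η : CliffordAlgebra Q) : Prop :=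
  ξ ∈ lipMon Q ∧ η ∈ lipMon Q ∧ ¬(ξ = 0 ∧ η = 0) ∧ ξ * cconj η ∈ paravec Q

/-- Membership in `SL(2, $Γ)`: entries in the Lipschitz monoid, pseudo-determinant
`a^* d - c^* b = 1`, and `a b^*, c d^*, c^* a, d^* b` paravectors. -/
def IsSL2 (Q : QuadraticForm ℝ M) (a b c d : CliffordAlgebra Q) : Prop :=
  a ∈ lipMon Q ∧ b ∈ lipMon Q ∧ c ∈ lipMon Q ∧ d ∈ lipMon Q ∧
    reverse a * d - reverse c * b = 1 ∧
    a * reverse b ∈ paravec Q ∧ c * reverse d ∈ paravec Q ∧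
    reverse c * a ∈ paravec Q ∧ reverse d * b ∈ paravec Q

/-!
A Lipschitz spinor is the first column of a matrix in `SL(2, $Γ)`: the explicit one when both
components are units, a diagonal or antidiagonal one otherwise. So if `κ₁` and `κ₂` are the first
columns of `A₁` and `A₂`, then `A₂ A₁⁻¹` sends `κ₁` to `κ₂`.

For a general quadratic form the entries of `A₂ A₁⁻¹` may leave the Lipschitz monoid. The shear
`T = [[1, t], [0, 1]]` fixes `(1, 0)`, so `A₂ T A₁⁻¹` serves as well. Each of its entries that could
leave the monoid has the form `x (t + p) y` with `x`, `y` in the Lipschitz group and `p = r + v` a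
paravector, and `t + p` is invertible for all large real `t` because its norm `(t + r)² - Q v` is
then positive.
-/

open Filter

section Paravectors

variable {Q : QuadraticForm ℝ M} {p q x : CliffordAlgebra Q} {u : (CliffordAlgebra Q)ˣ}

theorem cconj_eq_star (x : CliffordAlgebra Q) : cconj x = star x :=
  (star_def x).symm

theorem mem_paravec_iff : p ∈ paravec Q ↔ ∃ (r : ℝ) (v : M), algebraMap ℝ _ r + ι Q v = p := by
  simp [paravec, Submodule.mem_sup]

theorem algebraMap_mem_paravec (r : ℝ) : algebraMap ℝ (CliffordAlgebra Q) r ∈ paravec Q :=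
  mem_paravec_iff.2 ⟨r, 0, by simp⟩

theorem one_mem_paravec : (1 : CliffordAlgebra Q) ∈ paravec Q := by
  simpa using algebraMap_mem_paravec (Q := Q) 1

theorem reverse_eq_self_of_mem_paravec (hp : p ∈ paravec Q) : reverse p = p := by
  obtain ⟨r, v, rfl⟩ := mem_paravec_iff.1 hp
  simp

theorem reverse_mem_paravec_iff : reverse x ∈ paravec Q ↔ x ∈ paravec Q := by
  refine ⟨fun h => ?_, fun h => (reverse_eq_self_of_mem_paravec h).symm ▸ h⟩
  rwa [← reverse_eq_self_of_mem_paravec h, reverse_reverse] at h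

theorem star_algebraMap_add_ι (r : ℝ) (v : M) :
    star (algebraMap ℝ _ r + ι Q v) = algebraMap ℝ _ r + ι Q (-v) := by
  simp

theorem star_mem_paravec (hp : p ∈ paravec Q) : star p ∈ paravec Q := by
  obtain ⟨r, v, rfl⟩ := mem_paravec_iff.1 hp
  exact mem_paravec_iff.2 ⟨r, -v, (star_algebraMap_add_ι r v).symm⟩

theorem algebraMap_add_ι_mul_star (r : ℝ) (v : M) :
    (algebraMap ℝ _ r + ι Q v) * star (algebraMap ℝ _ r + ι Q v) =
      algebraMap ℝ _ (r ^ 2 - Q v) := by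
  have hcomm : Commute (algebraMap ℝ _ r) (ι Q v) := Algebra.commutes r (ι Q v)
  rw [star_algebraMap_add_ι, map_neg, ← sub_eq_add_neg, ← hcomm.mul_self_sub_mul_self_eq,
    ι_sq_scalar, ← map_mul, ← map_sub, sq]

theorem exists_mul_star_eq_algebraMap_of_mem_paravec (hp : p ∈ paravec Q) :
    ∃ r : ℝ, p * star p = algebraMap ℝ _ r := by
  obtain ⟨r, v, rfl⟩ := mem_paravec_iff.1 hp
  exact ⟨_, algebraMap_add_ι_mul_star r v⟩

theorem exists_mul_add_star_eq_algebraMap (hp : p ∈ paravec Q) (hq : q ∈ paravec Q) :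
    ∃ r : ℝ, p * q + star (p * q) = algebraMap ℝ _ r := by
  have hq' := star_mem_paravec hq
  obtain ⟨r, hr⟩ := exists_mul_star_eq_algebraMap_of_mem_paravec (add_mem hp hq')
  obtain ⟨s, hs⟩ := exists_mul_star_eq_algebraMap_of_mem_paravec hp
  obtain ⟨t, ht⟩ := exists_mul_star_eq_algebraMap_of_mem_paravec hq'
  refine ⟨r - s - t, ?_⟩
  rw [map_sub, map_sub, ← hr, ← hs, ← ht, star_mul, star_add, star_star]
  noncomm_ring

theorem mul_mul_self_mem_paravec (hp : p ∈ paravec Q) (hq : q ∈ paravec Q) :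
    p * q * p ∈ paravec Q := by
  obtain ⟨r, hr⟩ := exists_mul_add_star_eq_algebraMap hp hq
  obtain ⟨s, hs⟩ := exists_mul_star_eq_algebraMap_of_mem_paravec (star_mem_paravec hp)
  rw [star_star] at hs
  have expansion : p * q * p = r • p - s • star q := by
    rw [Algebra.smul_def, Algebra.smul_def, Algebra.commutes s, ← hr, ← hs, star_mul]
    noncomm_ring
  rw [expansion]
  exact sub_mem (Submodule.smul_mem _ _ hp) (Submodule.smul_mem _ _ (star_mem_paravec hq))

theorem val_inv_eq_smul_star {r : ℝ}
    (h : (u : CliffordAlgebra Q) * star (u : CliffordAlgebra Q) = algebraMap ℝ _ r) :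
    (↑u⁻¹ : CliffordAlgebra Q) = r⁻¹ • star (u : CliffordAlgebra Q) := by
  have hr : r ≠ 0 := by
    rintro rfl
    rw [map_zero, Units.mul_right_eq_zero, star_eq_zero] at h
    exact u.ne_zero h
  refine Units.inv_eq_of_mul_eq_one_right ?_
  rw [mul_smul_comm, h, Algebra.algebraMap_eq_smul_one, inv_smul_smul₀ hr]

theorem inv_mem_paravec (hu : (u : CliffordAlgebra Q) ∈ paravec Q) :
    (↑u⁻¹ : CliffordAlgebra Q) ∈ paravec Q := by
  obtain ⟨r, hr⟩ := exists_mul_star_eq_algebraMap_of_mem_paravec hu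
  rw [val_inv_eq_smul_star hr]
  exact Submodule.smul_mem _ _ (star_mem_paravec hu)

end Paravectors

section LipschitzMonoid

variable {Q : QuadraticForm ℝ M} {p x y : CliffordAlgebra Q} {u : (CliffordAlgebra Q)ˣ}

theorem zero_mem_lipMon : (0 : CliffordAlgebra Q) ∈ lipMon Q :=
  Set.mem_insert _ _

theorem val_mem_lipMon_iff : (u : CliffordAlgebra Q) ∈ lipMon Q ↔ u ∈ lipUnits Q := by
  simp [lipMon, lipGrp, Units.val_inj]

theorem val_mem_lipMon_of_mem_paravec (hu : (u : CliffordAlgebra Q) ∈ paravec Q) :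
    (u : CliffordAlgebra Q) ∈ lipMon Q :=
  val_mem_lipMon_iff.2 (Subgroup.subset_closure hu)

theorem inv_mem_lipMon (hu : (u : CliffordAlgebra Q) ∈ lipMon Q) :
    (↑u⁻¹ : CliffordAlgebra Q) ∈ lipMon Q :=
  val_mem_lipMon_iff.2 (inv_mem (val_mem_lipMon_iff.1 hu))

theorem eq_zero_or_eq_val_of_mem_lipMon (hx : x ∈ lipMon Q) :
    x = 0 ∨ ∃ u : (CliffordAlgebra Q)ˣ, x = u := by
  rcases hx with rfl | ⟨u, -, rfl⟩
  exacts [Or.inl rfl, Or.inr ⟨u, rfl⟩]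

theorem mul_mem_lipMon (hx : x ∈ lipMon Q) (hy : y ∈ lipMon Q) : x * y ∈ lipMon Q := by
  rcases hx with rfl | ⟨u, hu, rfl⟩
  · simpa using zero_mem_lipMon
  rcases hy with rfl | ⟨v, hv, rfl⟩
  · simpa using zero_mem_lipMon
  exact val_mem_lipMon_iff.2 (mul_mem hu hv)

@[elab_as_elim]
theorem lipMon_induction {P : (x : CliffordAlgebra Q) → x ∈ lipMon Q → Prop}
    (paravec : ∀ p (hp : p ∈ lipMon Q), p ∈ paravec Q → P p hp)
    (mul : ∀ x y hx hy, P x hx → P y hy → P (x * y) (mul_mem_lipMon hx hy))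
    {x : CliffordAlgebra Q} (hx : x ∈ lipMon Q) : P x hx := by
  obtain rfl | ⟨u, hu, rfl⟩ := id hx
  · exact paravec 0 _ (zero_mem _)
  induction hu using Subgroup.closure_induction'' with
  | mem u hu => exact paravec u _ hu
  | inv_mem u hu => exact paravec _ _ (inv_mem_paravec hu)
  | one => exact paravec _ _ one_mem_paravec
  | mul u v hu hv hPu hPv =>
    exact mul u v _ _ (hPu (val_mem_lipMon_iff.2 hu)) (hPv (val_mem_lipMon_iff.2 hv))

theorem algebraMap_add_ι_mem_lipMon {r : ℝ} {v : M} (h : r ^ 2 - Q v ≠ 0) :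
    algebraMap ℝ _ r + ι Q v ∈ lipMon Q := by
  set p := algebraMap ℝ _ r + ι Q v with hp
  have right_inv : p * ((r ^ 2 - Q v)⁻¹ • star p) = 1 := by
    rw [mul_smul_comm, algebraMap_add_ι_mul_star, Algebra.algebraMap_eq_smul_one, inv_smul_smul₀ h]
  have left_inv : ((r ^ 2 - Q v)⁻¹ • star p) * p = 1 := by
    have hstar := algebraMap_add_ι_mul_star (Q := Q) r (-v)
    rw [← star_algebraMap_add_ι, ← hp, star_star, QuadraticMap.map_neg] at hstar
    rw [smul_mul_assoc, hstar, Algebra.algebraMap_eq_smul_one, inv_smul_smul₀ h]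
  exact val_mem_lipMon_of_mem_paravec (u := ⟨p, _, right_inv, left_inv⟩)
    (mem_paravec_iff.2 ⟨r, v, rfl⟩)

theorem algebraMap_mem_lipMon (r : ℝ) : algebraMap ℝ (CliffordAlgebra Q) r ∈ lipMon Q := by
  obtain rfl | hr := eq_or_ne r 0
  · simpa using zero_mem_lipMon
  · simpa using algebraMap_add_ι_mem_lipMon (Q := Q) (r := r) (v := 0) (by simpa using hr)

theorem one_mem_lipMon : (1 : CliffordAlgebra Q) ∈ lipMon Q := by
  simpa using algebraMap_mem_lipMon (Q := Q) 1

theorem smul_mem_lipMon (r : ℝ) (hx : x ∈ lipMon Q) : r • x ∈ lipMon Q := by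
  rw [Algebra.smul_def]
  exact mul_mem_lipMon (algebraMap_mem_lipMon r) hx

theorem neg_mem_lipMon (hx : x ∈ lipMon Q) : -x ∈ lipMon Q := by
  simpa using smul_mem_lipMon (-1) hx

theorem reverse_mem_lipMon (hx : x ∈ lipMon Q) : reverse x ∈ lipMon Q := by
  induction hx using lipMon_induction with
  | paravec p _ hp => rwa [reverse_eq_self_of_mem_paravec hp]
  | mul x y _ _ hx hy => rw [reverse.map_mul]; exact mul_mem_lipMon hy hx

theorem mul_mul_reverse_mem_paravec (hx : x ∈ lipMon Q) (hp : p ∈ paravec Q) :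
    x * p * reverse x ∈ paravec Q := by
  induction hx using lipMon_induction generalizing p with
  | paravec x _ hx =>
    rw [reverse_eq_self_of_mem_paravec hx]
    exact mul_mul_self_mem_paravec hx hp
  | mul x y _ _ hx hy => simpa [mul_assoc] using hx (hy hp)

theorem reverse_mul_mul_mem_paravec (hx : x ∈ lipMon Q) (hp : p ∈ paravec Q) :
    reverse x * p * x ∈ paravec Q := by
  simpa using mul_mul_reverse_mem_paravec (reverse_mem_lipMon hx) hp

theorem exists_mul_star_eq_algebraMap (hx : x ∈ lipMon Q) :
    ∃ r : ℝ, x * star x = algebraMap ℝ _ r := by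
  induction hx using lipMon_induction with
  | paravec p _ hp => exact exists_mul_star_eq_algebraMap_of_mem_paravec hp
  | mul x y _ _ hx hy =>
    obtain ⟨r, hr⟩ := hx
    obtain ⟨s, hs⟩ := hy
    refine ⟨s * r, ?_⟩
    calc x * y * star (x * y) = x * (y * star y) * star x := by simp only [star_mul, mul_assoc]
      _ = algebraMap ℝ _ (s * r) := by rw [hs, ← Algebra.commutes, mul_assoc, hr, map_mul]

theorem reverse_val_mul_reverse_inv (u : (CliffordAlgebra Q)ˣ) :
    reverse (u : CliffordAlgebra Q) * reverse (↑u⁻¹ : CliffordAlgebra Q) = 1 := by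
  rw [← reverse.map_mul, Units.inv_mul, reverse.map_one]

theorem reverse_inv_mul_reverse_val (u : (CliffordAlgebra Q)ˣ) :
    reverse (↑u⁻¹ : CliffordAlgebra Q) * reverse (u : CliffordAlgebra Q) = 1 := by
  rw [← reverse.map_mul, Units.mul_inv, reverse.map_one]

theorem inverse_reverse_val (u : (CliffordAlgebra Q)ˣ) :
    Ring.inverse (reverse (u : CliffordAlgebra Q)) = reverse (↑u⁻¹ : CliffordAlgebra Q) :=
  Ring.inverse_unit ⟨_, _, reverse_val_mul_reverse_inv u, reverse_inv_mul_reverse_val u⟩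

theorem mul_inv_mem_paravec (hu : (u : CliffordAlgebra Q) ∈ lipMon Q)
    (h : reverse (u : CliffordAlgebra Q) * x ∈ paravec Q) :
    x * (↑u⁻¹ : CliffordAlgebra Q) ∈ paravec Q := by
  simpa [← mul_assoc, reverse_inv_mul_reverse_val] using
    reverse_mul_mul_mem_paravec (inv_mem_lipMon hu) h

theorem inv_mul_mem_paravec (hu : (u : CliffordAlgebra Q) ∈ lipMon Q)
    (h : u * reverse x ∈ paravec Q) : (↑u⁻¹ : CliffordAlgebra Q) * x ∈ paravec Q := by
  rw [← reverse_mem_paravec_iff]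
  simpa [← mul_assoc] using mul_mul_reverse_mem_paravec (inv_mem_lipMon hu) h

theorem eventually_algebraMap_add_mem_lipMon (hp : p ∈ paravec Q) :
    ∀ᶠ t : ℝ in atTop, algebraMap ℝ _ t + p ∈ lipMon Q := by
  obtain ⟨r, v, rfl⟩ := mem_paravec_iff.1 hp
  have htendsto : Tendsto (fun t : ℝ => (t + r) ^ 2) atTop atTop :=
    (tendsto_pow_atTop two_ne_zero).comp (tendsto_atTop_add_const_right _ r tendsto_id)
  filter_upwards [htendsto.eventually_gt_atTop (Q v)] with t ht
  rw [← add_assoc, ← map_add]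
  exact algebraMap_add_ι_mem_lipMon (sub_pos.2 ht).ne'

theorem eventually_mul_add_smul_add_mul_mem_lipMon {a b c d : CliffordAlgebra Q}
    (ha : a ∈ lipMon Q) (hb : b ∈ lipMon Q) (hc : c ∈ lipMon Q) (hd : d ∈ lipMon Q)
    (hab : a * reverse b ∈ paravec Q) (hdc : reverse d * c ∈ paravec Q) :
    ∀ᶠ t : ℝ in atTop, a * (c + t • d) + b * d ∈ lipMon Q := by
  rcases eq_zero_or_eq_val_of_mem_lipMon ha with rfl | ⟨a, rfl⟩
  · simp [mul_mem_lipMon hb hd]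
  rcases eq_zero_or_eq_val_of_mem_lipMon hd with rfl | ⟨d, rfl⟩
  · simp [mul_mem_lipMon ha hc]
  filter_upwards [eventually_algebraMap_add_mem_lipMon
    (add_mem (mul_inv_mem_paravec hd hdc) (inv_mul_mem_paravec ha hab))] with t ht
  have factored : a * (c + t • ↑d) + b * d =
      a * (algebraMap ℝ _ t + (c * ↑d⁻¹ + ↑a⁻¹ * b)) * d := by
    simp only [Algebra.smul_def, mul_add, add_mul, mul_assoc, Units.inv_mul, mul_one,
      Units.mul_inv_cancel_left]
    abel
  rw [factored]
  exact mul_mem_lipMon (mul_mem_lipMon ha ht) hd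

theorem eventually_add_smul_mem_lipMon (hx : x ∈ lipMon Q) (hy : y ∈ lipMon Q)
    (hyx : reverse y * x ∈ paravec Q) : ∀ᶠ t : ℝ in atTop, x + t • y ∈ lipMon Q := by
  simpa using eventually_mul_add_smul_add_mul_mem_lipMon one_mem_lipMon zero_mem_lipMon hx hy
    (by simp) hyx

end LipschitzMonoid

section SpecialLinear

variable {Q : QuadraticForm ℝ M} {a b c d a' b' c' d' : CliffordAlgebra Q}

theorem reverse_mul_comm_of_mem_paravec {x y : CliffordAlgebra Q}
    (h : reverse x * y ∈ paravec Q) : reverse y * x = reverse x * y := by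
  simpa using reverse_eq_self_of_mem_paravec h

theorem exists_paravec_upper_row_eq {c : (CliffordAlgebra Q)ˣ}
    (hc : (c : CliffordAlgebra Q) ∈ lipMon Q) (hdet : reverse a * d - reverse ↑c * b = 1)
    (hca : reverse ↑c * a ∈ paravec Q) :
    ∃ z ∈ paravec Q, a = z * c ∧ b = z * d - reverse ↑c⁻¹ := by
  have hz := mul_inv_mem_paravec hc hca
  obtain ⟨z, rfl⟩ : ∃ z, a = z * c := ⟨a * ↑c⁻¹, by simp⟩
  rw [Units.mul_inv_cancel_right] at hz
  refine ⟨z, hz, rfl, eq_sub_of_add_eq' ?_⟩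
  calc reverse ↑c⁻¹ + b
      = reverse ↑c⁻¹ * (reverse (Q := Q) (z * c) * d - reverse ↑c * b) + b := by rw [hdet, mul_one]
    _ = reverse ↑c⁻¹ * reverse (c : CliffordAlgebra Q) * (z * d - b) + b := by
      rw [reverse.map_mul, reverse_eq_self_of_mem_paravec hz]
      noncomm_ring
    _ = z * d := by rw [reverse_inv_mul_reverse_val, one_mul, sub_add_cancel]

theorem lower_mul_reverse_mem_paravec (hc : c ∈ lipMon Q) (hd : d ∈ lipMon Q)
    (hdet : reverse a * d - reverse c * b = 1) (hca : reverse c * a ∈ paravec Q)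
    (hdb : reverse d * b ∈ paravec Q) : c * reverse d ∈ paravec Q := by
  rcases eq_zero_or_eq_val_of_mem_lipMon hc with rfl | ⟨c, rfl⟩
  · simp
  obtain ⟨z, hz, rfl, rfl⟩ := exists_paravec_upper_row_eq hc hdet hca
  have hdc : reverse d * reverse ↑c⁻¹ ∈ paravec Q := by
    simpa [mul_sub, mul_assoc] using sub_mem (reverse_mul_mul_mem_paravec hd hz) hdb
  simpa [mul_assoc, reverse_inv_mul_reverse_val] using mul_mul_reverse_mem_paravec hc hdc

theorem isSL2_of_reverse_mul_mem_paravec (ha : a ∈ lipMon Q) (hb : b ∈ lipMon Q)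
    (hc : c ∈ lipMon Q) (hd : d ∈ lipMon Q) (hdet : reverse a * d - reverse c * b = 1)
    (hca : reverse c * a ∈ paravec Q) (hdb : reverse d * b ∈ paravec Q) :
    IsSL2 Q a b c d := by
  have hac := reverse_mul_comm_of_mem_paravec hca
  have hbd := reverse_mul_comm_of_mem_paravec hdb
  have upper_row : a * reverse b ∈ paravec Q :=
    lower_mul_reverse_mem_paravec (a := -c) (b := -d) ha hb
      (by rw [map_neg, ← hdet]; noncomm_ring)
      (by rw [mul_neg, hac]; exact neg_mem hca) (by rw [mul_neg, hbd]; exact neg_mem hdb)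
  exact ⟨ha, hb, hc, hd, hdet, upper_row, lower_mul_reverse_mem_paravec hc hd hdet hca hdb,
    hca, hdb⟩

theorem IsSL2.reverse_mul_sub (h : IsSL2 Q a b c d) : reverse d * a - reverse b * c = 1 := by
  obtain ⟨-, -, -, -, hdet, -⟩ := h
  simpa using congrArg reverse hdet

theorem IsSL2.mul_reverse_sub (h : IsSL2 Q a b c d) : d * reverse a - c * reverse b = 1 := by
  obtain ⟨-, -, hc, hd, hdet, -, hcd, hca, -⟩ := h
  rcases eq_zero_or_eq_val_of_mem_lipMon hc with rfl | ⟨c, rfl⟩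
  · rcases eq_zero_or_eq_val_of_mem_lipMon hd with rfl | ⟨d, rfl⟩
    · simp at hdet
    simp only [map_zero, zero_mul, sub_zero] at hdet ⊢
    rw [Units.mul_eq_one_iff_eq_inv.1 hdet, Units.mul_inv]
  · obtain ⟨z, hz, rfl, rfl⟩ := exists_paravec_upper_row_eq hc hdet hca
    have hdc : d * reverse (c : CliffordAlgebra Q) = c * reverse d := by
      simpa using reverse_eq_self_of_mem_paravec hcd
    simp [reverse_eq_self_of_mem_paravec hz, mul_sub, ← mul_assoc, hdc]

theorem IsSL2.inv (h : IsSL2 Q a b c d) :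
    IsSL2 Q (reverse d) (-reverse b) (-reverse c) (reverse a) := by
  have hdet := h.mul_reverse_sub
  obtain ⟨ha, hb, hc, hd, -, hab, hcd, -, -⟩ := h
  refine isSL2_of_reverse_mul_mem_paravec (reverse_mem_lipMon hd)
    (neg_mem_lipMon (reverse_mem_lipMon hb)) (neg_mem_lipMon (reverse_mem_lipMon hc))
    (reverse_mem_lipMon ha) ?_ ?_ ?_
  · simpa using hdet
  · simpa using hcd
  · simpa using hab

theorem IsSL2.reverse_mul_add_mul_add_mem_paravec (h : IsSL2 Q a b c d) {x y : CliffordAlgebra Q}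
    (hy : y ∈ lipMon Q) (hyx : reverse y * x ∈ paravec Q) (hmem : c * x + d * y ∈ lipMon Q) :
    reverse (c * x + d * y) * (a * x + b * y) ∈ paravec Q := by
  have hda := h.reverse_mul_sub
  obtain ⟨-, -, hc, -, hdet, -, hcd, hca, hdb⟩ := h
  rcases eq_zero_or_eq_val_of_mem_lipMon hc with rfl | ⟨c, rfl⟩
  · simp only [mul_zero, sub_zero] at hda
    have expansion : reverse (0 * x + d * y) * (a * x + b * y) =
        reverse y * (reverse d * a) * x + reverse y * (reverse d * b) * y := by
      simp [mul_add, mul_assoc]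
    rw [expansion, hda, mul_one]
    exact add_mem hyx (reverse_mul_mul_mem_paravec hy hdb)
  · obtain ⟨z, hz, rfl, rfl⟩ := exists_paravec_upper_row_eq hc hdet hca
    have hdc : reverse d * reverse ↑c⁻¹ ∈ paravec Q := by
      rw [← reverse_mem_paravec_iff]
      simpa using inv_mul_mem_paravec hc hcd
    have cancel : reverse (c : CliffordAlgebra Q) * (reverse ↑c⁻¹ * y) = y := by
      rw [← mul_assoc, reverse_val_mul_reverse_inv, one_mul]
    have expansion : reverse (Q := Q) (c * x + d * y) *
          (z * (c : CliffordAlgebra Q) * x + (z * d - reverse (↑c⁻¹ : CliffordAlgebra Q)) * y) =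
        reverse (Q := Q) (c * x + d * y) * z * (c * x + d * y) - reverse x * y -
          reverse y * (reverse d * reverse (↑c⁻¹ : CliffordAlgebra Q)) * y := by
      simp only [map_add, reverse.map_mul, add_mul, mul_add, sub_mul, mul_sub, mul_assoc, cancel]
      abel
    rw [expansion]
    exact sub_mem (sub_mem (reverse_mul_mul_mem_paravec hmem hz)
      (reverse_mul_comm_of_mem_paravec hyx ▸ hyx)) (reverse_mul_mul_mem_paravec hy hdc)

theorem IsSL2.mul (h : IsSL2 Q a b c d) (h' : IsSL2 Q a' b' c' d')
    (h₁₁ : a * a' + b * c' ∈ lipMon Q) (h₁₂ : a * b' + b * d' ∈ lipMon Q)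
    (h₂₁ : c * a' + d * c' ∈ lipMon Q) (h₂₂ : c * b' + d * d' ∈ lipMon Q) :
    IsSL2 Q (a * a' + b * c') (a * b' + b * d') (c * a' + d * c') (c * b' + d * d') := by
  obtain ⟨-, -, hc', hd', hdet', -, -, hca', hdb'⟩ := id h'
  refine isSL2_of_reverse_mul_mem_paravec h₁₁ h₁₂ h₂₁ h₂₂ ?_
    (h.reverse_mul_add_mul_add_mem_paravec hc' hca' h₂₁)
    (h.reverse_mul_add_mul_add_mem_paravec hd' hdb' h₂₂)
  have hdet₂ := h.reverse_mul_sub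
  obtain ⟨-, -, -, -, hdet, -, -, hca, hdb⟩ := h
  calc reverse (a * a' + b * c') * (c * b' + d * d') - reverse (c * a' + d * c') * (a * b' + b * d')
      = reverse a' * (reverse a * c - reverse c * a) * b'
        + reverse a' * (reverse a * d - reverse c * b) * d'
        - reverse c' * (reverse d * a - reverse b * c) * b'
        + reverse c' * (reverse b * d - reverse d * b) * d' := by
        simp only [map_add, reverse.map_mul]
        noncomm_ring
    _ = reverse a' * d' - reverse c' * b' := by
        rw [reverse_mul_comm_of_mem_paravec hca, reverse_mul_comm_of_mem_paravec hdb, hdet, hdet₂]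
        simp
    _ = 1 := hdet'

theorem isSL2_shear (t : ℝ) : IsSL2 Q 1 (algebraMap ℝ _ t) 0 1 :=
  isSL2_of_reverse_mul_mem_paravec one_mem_lipMon (algebraMap_mem_lipMon t) zero_mem_lipMon
    one_mem_lipMon (by simp) (by simp) (by simpa using algebraMap_mem_paravec t)

theorem IsSL2.shear_mul (h : IsSL2 Q a b c d) {t : ℝ} (ha : a + t • c ∈ lipMon Q)
    (hb : b + t • d ∈ lipMon Q) : IsSL2 Q (a + t • c) (b + t • d) c d := by
  obtain ⟨-, -, hc, hd, -⟩ := id h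
  have hmul := (isSL2_shear t).mul h (by simpa [← Algebra.smul_def] using ha)
    (by simpa [← Algebra.smul_def] using hb) (by simpa using hc) (by simpa using hd)
  simpa [← Algebra.smul_def] using hmul

theorem IsSL2.exists_mul_shear_mul (h : IsSL2 Q a b c d) (h' : IsSL2 Q a' b' c' d') :
    ∃ t : ℝ, IsSL2 Q (a * (a' + t • c') + b * c') (a * (b' + t • d') + b * d')
      (c * (a' + t • c') + d * c') (c * (b' + t • d') + d * d') := by
  obtain ⟨ha, hb, hc, hd, -, hab, hcd, -, -⟩ := id h
  obtain ⟨ha', hb', hc', hd', -, -, -, hca', hdb'⟩ := id h'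
  obtain ⟨t, s₁, s₂, m₁₁, m₁₂, m₂₁, m₂₂⟩ :=
    ((eventually_add_smul_mem_lipMon ha' hc' hca').and <|
      (eventually_add_smul_mem_lipMon hb' hd' hdb').and <|
      (eventually_mul_add_smul_add_mul_mem_lipMon ha hb ha' hc' hab hca').and <|
      (eventually_mul_add_smul_add_mul_mem_lipMon ha hb hb' hd' hab hdb').and <|
      (eventually_mul_add_smul_add_mul_mem_lipMon hc hd ha' hc' hcd hca').and <|
      eventually_mul_add_smul_add_mul_mem_lipMon hc hd hb' hd' hcd hdb').exists
  exact ⟨t, h.mul (h'.shear_mul s₁ s₂) m₁₁ m₁₂ m₂₁ m₂₂⟩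

end SpecialLinear

section Spinors

variable {Q : QuadraticForm ℝ M} {ξ η ξ₁ η₁ ξ₂ η₂ : CliffordAlgebra Q}

theorem IsSpinor.mul_inv_mem_paravec {η : (CliffordAlgebra Q)ˣ} (h : IsSpinor Q ξ η) :
    ξ * (↑η⁻¹ : CliffordAlgebra Q) ∈ paravec Q := by
  obtain ⟨-, hη, -, hξη⟩ := h
  obtain ⟨r, hr⟩ := exists_mul_star_eq_algebraMap hη
  rw [val_inv_eq_smul_star hr, mul_smul_comm, ← cconj_eq_star]
  exact Submodule.smul_mem _ _ hξη

theorem IsSpinor.reverse_mul_mem_paravec (h : IsSpinor Q ξ η) : reverse η * ξ ∈ paravec Q := by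
  have hη := h.2.1
  rcases eq_zero_or_eq_val_of_mem_lipMon hη with rfl | ⟨η, rfl⟩
  · simp
  simpa [mul_assoc] using reverse_mul_mul_mem_paravec hη h.mul_inv_mem_paravec

theorem IsSpinor.isSL2 (h : IsSpinor Q ξ η) (hξ₀ : ξ ≠ 0) (hη₀ : η ≠ 0) :
    IsSL2 Q ξ (-((2 : ℝ)⁻¹ • Ring.inverse (reverse η)))
      η ((2 : ℝ)⁻¹ • Ring.inverse (reverse ξ)) := by
  have hηξ := h.reverse_mul_mem_paravec
  obtain ⟨hξ, hη, -, -⟩ := id h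
  obtain ⟨ξ, rfl⟩ := (eq_zero_or_eq_val_of_mem_lipMon hξ).resolve_left hξ₀
  obtain ⟨η, rfl⟩ := (eq_zero_or_eq_val_of_mem_lipMon hη).resolve_left hη₀
  have inverse_mem {u : (CliffordAlgebra Q)ˣ} (hu : (u : CliffordAlgebra Q) ∈ lipMon Q) :
      (2 : ℝ)⁻¹ • reverse ↑u⁻¹ ∈ lipMon Q :=
    smul_mem_lipMon _ (reverse_mem_lipMon (inv_mem_lipMon hu))
  rw [inverse_reverse_val, inverse_reverse_val]
  refine isSL2_of_reverse_mul_mem_paravec hξ (neg_mem_lipMon (inverse_mem hη)) hη (inverse_mem hξ)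
    ?_ hηξ ?_
  · rw [mul_neg, mul_smul_comm, mul_smul_comm, reverse_val_mul_reverse_inv,
      reverse_val_mul_reverse_inv, sub_neg_eq_add, ← add_smul]
    norm_num
  · have hinv : (↑ξ⁻¹ : CliffordAlgebra Q) * reverse ↑η⁻¹ ∈ paravec Q :=
      inv_mul_mem_paravec hξ (by
        rw [reverse_reverse]
        exact h.mul_inv_mem_paravec)
    rw [map_smul, reverse_reverse, mul_neg, smul_mul_smul_comm]
    exact neg_mem (Submodule.smul_mem _ _ hinv)

theorem IsSpinor.exists_isSL2 (h : IsSpinor Q ξ η) : ∃ b d, IsSL2 Q ξ b η d := by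
  obtain ⟨hξ, hη, hne, -⟩ := id h
  rcases eq_zero_or_eq_val_of_mem_lipMon hξ with rfl | ⟨ξ, rfl⟩ <;>
    rcases eq_zero_or_eq_val_of_mem_lipMon hη with rfl | ⟨η, rfl⟩
  · exact absurd ⟨rfl, rfl⟩ hne
  · refine ⟨-reverse ↑η⁻¹, 0, isSL2_of_reverse_mul_mem_paravec hξ
      (neg_mem_lipMon (reverse_mem_lipMon (inv_mem_lipMon hη))) hη zero_mem_lipMon ?_ ?_ ?_⟩ <;>
    simp [reverse_val_mul_reverse_inv]
  · refine ⟨0, reverse ↑ξ⁻¹, isSL2_of_reverse_mul_mem_paravec hξ zero_mem_lipMon hη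
      (reverse_mem_lipMon (inv_mem_lipMon hξ)) ?_ ?_ ?_⟩ <;>
    simp [reverse_val_mul_reverse_inv]
  · exact ⟨_, _, h.isSL2 ξ.ne_zero η.ne_zero⟩

theorem IsSpinor.exists_isSL2_map_eq (h₁ : IsSpinor Q ξ₁ η₁) (h₂ : IsSpinor Q ξ₂ η₂) :
    ∃ a b c d, IsSL2 Q a b c d ∧ a * ξ₁ + b * η₁ = ξ₂ ∧ c * ξ₁ + d * η₁ = η₂ := by
  obtain ⟨b₁, d₁, hA₁⟩ := h₁.exists_isSL2
  obtain ⟨b₂, d₂, hA₂⟩ := h₂.exists_isSL2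
  obtain ⟨t, hA⟩ := hA₂.exists_mul_shear_mul hA₁.inv
  have inv_upper : reverse d₁ * ξ₁ + -reverse b₁ * η₁ = 1 := by
    rw [← hA₁.reverse_mul_sub, neg_mul, sub_eq_add_neg]
  have inv_lower : -reverse η₁ * ξ₁ + reverse ξ₁ * η₁ = 0 := by
    rw [neg_mul, reverse_mul_comm_of_mem_paravec h₁.reverse_mul_mem_paravec, neg_add_cancel]
  have image (x y : CliffordAlgebra Q) :
      (x * (reverse d₁ + t • -reverse η₁) + y * -reverse η₁) * ξ₁ +
        (x * (-reverse b₁ + t • reverse ξ₁) + y * reverse ξ₁) * η₁ = x := by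
    calc _ = x * (reverse d₁ * ξ₁ + -reverse b₁ * η₁)
          + (t • x + y) * (-reverse η₁ * ξ₁ + reverse ξ₁ * η₁) := by
          simp only [mul_add, add_mul, smul_mul_assoc, mul_smul_comm, mul_assoc]
          abel
      _ = x := by rw [inv_upper, inv_lower, mul_one, mul_zero, add_zero]
  exact ⟨_, _, _, _, hA, image ξ₂ b₂, image η₂ d₂⟩

end Spinors

theorem sl2_transitive_general (Q : QuadraticForm ℝ M) :
    (∀ ξ₁ η₁ ξ₂ η₂ : CliffordAlgebra Q, IsSpinor Q ξ₁ η₁ → IsSpinor Q ξ₂ η₂ →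
      ∃ a b c d : CliffordAlgebra Q,
        IsSL2 Q a b c d ∧ a * ξ₁ + b * η₁ = ξ₂ ∧ c * ξ₁ + d * η₁ = η₂) ∧
    (∀ ξ η : CliffordAlgebra Q, IsSpinor Q ξ η → ξ ≠ 0 → η ≠ 0 →
      IsSL2 Q ξ (-((2 : ℝ)⁻¹ • Ring.inverse (reverse η)))
        η ((2 : ℝ)⁻¹ • Ring.inverse (reverse ξ)) ∧
      ξ * 1 + (-((2 : ℝ)⁻¹ • Ring.inverse (reverse η))) * 0 = ξ ∧
      η * 1 + ((2 : ℝ)⁻¹ • Ring.inverse (reverse ξ)) * 0 = η) :=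
  ⟨fun _ _ _ _ => IsSpinor.exists_isSL2_map_eq,
    fun _ _ h hξ hη => ⟨h.isSL2 hξ hη, by simp, by simp⟩⟩

/-- The action of `SL(2, $Γ_{n+1})` on Lipschitz spinors by matrix
multiplication is transitive; moreover for any Lipschitz spinor `(ξ,η)` with both components
nonzero, the matrix `[[ξ, −½ η^{*-1}],[η, ½ ξ^{*-1}]]` lies in `SL(2, $Γ_{n+1})` and sends
`(1,0)` to `(ξ,η)`. -/
theorem sl2_transitive (n : ℕ) :
    (∀ ξ₁ η₁ ξ₂ η₂ : CliffordAlgebra (negQ n),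
      IsSpinor (negQ n) ξ₁ η₁ → IsSpinor (negQ n) ξ₂ η₂ →
      ∃ a b c d : CliffordAlgebra (negQ n),
        IsSL2 (negQ n) a b c d ∧ a * ξ₁ + b * η₁ = ξ₂ ∧ c * ξ₁ + d * η₁ = η₂) ∧
    (∀ ξ η : CliffordAlgebra (negQ n), IsSpinor (negQ n) ξ η → ξ ≠ 0 → η ≠ 0 →
      IsSL2 (negQ n) ξ (-(((2 : ℝ)⁻¹) • Ring.inverse (reverse η)))
        η (((2 : ℝ)⁻¹) • Ring.inverse (reverse ξ)) ∧
      ξ * 1 + (-(((2 : ℝ)⁻¹) • Ring.inverse (reverse η))) * 0 = ξ ∧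
      η * 1 + (((2 : ℝ)⁻¹) • Ring.inverse (reverse ξ)) * 0 = η) := by
  exact sl2_transitive_general (negQ n)

end PaperCliff
end
end

section
/- For a Clifford matrix A = [[a,b],[c,d]] ∈ SL(2, $Γ_{n+1}) (so a^*d − c^*b = 1), the variant pseudo-determinant identities ad^* − bc^* = 1, da^* − cb^* = 1, and d^*a − b^*c = 1 also hold. -/
open CliffordAlgebra

noncomputable section

namespace PaperCliff

variable {M : Type*} [AddCommGroup M] [Module ℝ M]

/-!
The pseudo-determinant identity, its reversal and the reversal invariance of `c^* a` and `d^* b`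
say together that `[[d^*, -b^*], [-c^*, a^*]]` is a left inverse of `[[a, b], [c, d]]`. Clifford
algebras are stably finite: finitely many elements involve finitely many vectors, hence lie in the
image of the Clifford algebra of a free module of finite rank, which is a finite module. So the
left inverse is also a right inverse, and the remaining identities are the diagonal entries of
that product.
-/

section StablyFinite

variable {R A : Type*}

theorem isStablyFiniteRing_of_forall_finite_subset [Semiring A]
    (h : ∀ s : Set A, s.Finite → ∃ S : Subsemiring A, s ⊆ S ∧ IsStablyFiniteRing S) :
    IsStablyFiniteRing A where
  isDedekindFiniteMonoid n := by
    refine ⟨fun {X Y} hXY ↦ ?_⟩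
    obtain ⟨S, hS, _⟩ := h _ ((Set.finite_range fun ij : Fin n × Fin n ↦ X ij.1 ij.2).union
      (Set.finite_range fun ij : Fin n × Fin n ↦ Y ij.1 ij.2))
    let X' : Matrix (Fin n) (Fin n) S := .of fun i j ↦ ⟨X i j, hS (.inl ⟨(i, j), rfl⟩)⟩
    let Y' : Matrix (Fin n) (Fin n) S := .of fun i j ↦ ⟨Y i j, hS (.inr ⟨(i, j), rfl⟩)⟩
    have hX : S.subtype.mapMatrix X' = X := rfl
    have hY : S.subtype.mapMatrix Y' = Y := rfl
    have hX'Y' : X' * Y' = 1 :=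
      Matrix.map_injective S.subtype_injective <|
        show S.subtype.mapMatrix (X' * Y') = S.subtype.mapMatrix 1 by
          rw [map_mul, map_one, hX, hY, hXY]
    rw [← hX, ← hY, ← map_mul, mul_eq_one_symm hX'Y', map_one]

theorem isStablyFiniteRing_of_finite (R : Type*) [Semiring R] [OrzechProperty R] [Semiring A]
    [Module R A] [IsScalarTower R A A] [Module.Finite R A] : IsStablyFiniteRing A :=
  isStablyFiniteRing_iff_injective_of_surjective.mpr fun _ f hf ↦
    OrzechProperty.injective_of_surjective_endomorphism (f.restrictScalars R) hf

theorem exists_finset_subset_adjoin_image [CommSemiring R] [Semiring A] [Algebra R A]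
    {κ : Type*} {f : κ → A} {s : Set A} (hs : s.Finite)
    (hsf : s ⊆ Algebra.adjoin R (Set.range f)) :
    ∃ t : Finset κ, s ⊆ Algebra.adjoin R (f '' t) := by
  have directed : Directed (· ≤ ·) fun t : Finset κ ↦ Algebra.adjoin R (f '' (t : Set κ)) :=
    Monotone.directed_le fun _ _ htu ↦ Algebra.adjoin_mono (Set.image_mono htu)
  have iUnion_eq_univ : ⋃ t : Finset κ, (t : Set κ) = Set.univ :=
    Set.iUnion_eq_univ_iff.mpr fun i ↦ ⟨{i}, by simp⟩
  have iSup_eq : ⨆ t : Finset κ, Algebra.adjoin R (f '' (t : Set κ)) =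
      Algebra.adjoin R (Set.range f) := by
    rw [← Algebra.adjoin_iUnion, ← Set.image_iUnion, iUnion_eq_univ, Set.image_univ]
  rw [← iSup_eq, Subalgebra.coe_iSup_of_directed directed] at hsf
  lift s to Finset A using hs
  exact Directed.exists_mem_subset_of_finset_subset_biUnion directed hsf

theorem fin_two_mul_eq_one_iff [NonAssocSemiring A] {a b c d x y z w : A} :
    !![a, b; c, d] * !![x, y; z, w] = 1 ↔
      (a * x + b * z = 1 ∧ a * y + b * w = 0) ∧ c * x + d * z = 0 ∧ c * y + d * w = 1 := by
  simp [← Matrix.ext_iff, Fin.forall_fin_two]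

theorem mul_sub_mul_eq_one_of_isStablyFiniteRing [Ring A] [IsStablyFiniteRing A]
    {a b c d a' b' c' d' : A} (had : a' * d - c' * b = 1) (hda : d' * a - b' * c = 1)
    (hca : c' * a = a' * c) (hdb : d' * b = b' * d) :
    a * d' - b * c' = 1 ∧ d * a' - c * b' = 1 := by
  have left_inverse : !![d', -b'; -c', a'] * !![a, b; c, d] = 1 :=
    fin_two_mul_eq_one_iff.mpr
      (by simp [← sub_eq_add_neg, neg_add_eq_sub, had, hda, hca, hdb])
  obtain ⟨⟨h₁, -⟩, -, h₂⟩ := fin_two_mul_eq_one_iff.mp (mul_eq_one_symm left_inverse)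
  exact ⟨by simpa [sub_eq_add_neg] using h₁, by simpa [sub_eq_add_neg, add_comm] using h₂⟩

end StablyFinite

section CliffordAlgebra

variable {R V : Type*} [CommRing R] [AddCommGroup V] [Module R V]

theorem finite_cliffordAlgebra_of_free [Module.Free R V] [Module.Finite R V]
    (Q : QuadraticForm R V) : Module.Finite R (CliffordAlgebra Q) := by
  -- Allowing a non-symmetric `B` with `Q x = B x x` avoids dividing by `2`.
  obtain ⟨B, hB⟩ := LinearMap.BilinMap.toQuadraticMap_surjective Q
  let : LinearOrder (Module.Free.ChooseBasisIndex R V) := IsWellOrder.linearOrder WellOrderingRel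
  have : Module.Finite R (ExteriorAlgebra R V) :=
    .of_basis (Module.Free.chooseBasis R V).ExteriorAlgebra
  exact .equiv (changeFormEquiv (Q := (0 : QuadraticForm R V)) (B := B) (by rw [hB, sub_zero]))

theorem exists_finite_subalgebra_of_finite_subset {Q : QuadraticForm R V}
    {s : Set (CliffordAlgebra Q)} (hs : s.Finite) :
    ∃ S : Subalgebra R (CliffordAlgebra Q), s ⊆ S ∧ Module.Finite R S := by
  classical
  obtain ⟨t, hst⟩ := exists_finset_subset_adjoin_image (R := R) (f := ι Q) hs
    (by simp [adjoin_range_ι])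
  let f := Fintype.linearCombination R ((↑) : t → V)
  let g : Q.comp f →qᵢ Q := ⟨f, fun _ ↦ rfl⟩
  have := finite_cliffordAlgebra_of_free (Q.comp f)
  refine ⟨(map g).range, hst.trans (Algebra.adjoin_le ?_), .range (map g).toLinearMap⟩
  rintro _ ⟨v, hv, rfl⟩
  have hfv : f (Pi.single ⟨v, hv⟩ 1) = v := by simp [f]
  exact ⟨ι (Q.comp f) (Pi.single ⟨v, hv⟩ 1), (map_apply_ι g _).trans (congrArg (ι Q) hfv)⟩

instance isStablyFiniteRing_cliffordAlgebra (Q : QuadraticForm R V) :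
    IsStablyFiniteRing (CliffordAlgebra Q) :=
  isStablyFiniteRing_of_forall_finite_subset fun _ hs ↦
    have ⟨S, hsS, _⟩ := exists_finite_subalgebra_of_finite_subset hs
    ⟨S.toSubsemiring, hsS, isStablyFiniteRing_of_finite (A := S) R⟩

theorem variant_pseudodeterminants_general {Q : QuadraticForm R V} {a b c d : CliffordAlgebra Q}
    (hdet : reverse a * d - reverse c * b = 1)
    (hca : reverse (reverse c * a) = reverse c * a)
    (hdb : reverse (reverse d * b) = reverse d * b) :
    a * reverse d - b * reverse c = 1 ∧
    d * reverse a - c * reverse b = 1 ∧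
    reverse d * a - reverse b * c = 1 := by
  have hdet' : reverse d * a - reverse b * c = 1 := by
    simpa [reverse.map_mul] using congrArg reverse hdet
  rw [reverse.map_mul, reverse_reverse] at hca hdb
  have ⟨had, hda⟩ := mul_sub_mul_eq_one_of_isStablyFiniteRing hdet hdet' hca.symm hdb.symm
  exact ⟨had, hda, hdet'⟩

end CliffordAlgebra

theorem reverse_of_mem_paravec {Q : QuadraticForm ℝ M} {x : CliffordAlgebra Q}
    (hx : x ∈ paravec Q) : reverse x = x := by
  obtain ⟨_, ⟨r, rfl⟩, _, ⟨v, rfl⟩, rfl⟩ := Submodule.mem_sup.mp hx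
  simp [reverse.commutes]

/-- For a Clifford matrix `[[a,b],[c,d]] ∈ SL(2, $Γ_{n+1})` (so
`a^* d − c^* b = 1`), the variant pseudo-determinant identities `a d^* − b c^* = 1`,
`d a^* − c b^* = 1` and `d^* a − b^* c = 1` also hold. -/
theorem variant_pseudodeterminants (n : ℕ) (a b c d : CliffordAlgebra (negQ n))
    (h : IsSL2 (negQ n) a b c d) :
    a * reverse d - b * reverse c = 1 ∧
    d * reverse a - c * reverse b = 1 ∧
    reverse d * a - reverse b * c = 1 := by
  obtain ⟨_, _, _, _, hdet, _, _, hca, hdb⟩ := h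
  exact variant_pseudodeterminants_general hdet (reverse_of_mem_paravec hca)
    (reverse_of_mem_paravec hdb)

end PaperCliff
end
end
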